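/- arXiv:2305.08062 — 10 statements merged into one kernel-verified Lean document; each statement's English description precedes it below -/
import Mathlib

section
/- Fix x ∈ 𝒳 and suppose cluster common support holds at x, i.e., for every c ∈ 𝒞, π(c|x) > 0 implies π₀(c|x) > 0. Then for every function G : 𝒞 → ℝ, Σ_a π₀(a|x) · w(x, φ(x,a)) · G(φ(x,a)) = Σ_a π(a|x) · G(φ(x,a)). -/
open Finset

/-- The probability that a policy `pol` on a finite action set puts on the
cluster `c` under the clustering `φ` (for a fixed context). -/
noncomputable def clusterProb {A C : Type*} [Fintype A] [DecidableEq C]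
    (pol : A → ℝ) (φ : A → C) (c : C) : ℝ :=
  ∑ a ∈ univ.filter (fun a => φ a = c), pol a

/-- The cluster importance weight `w(x,c) = π(c|x) / π₀(c|x)` (for a fixed
context), with the convention `t / 0 = 0`. -/
noncomputable def clusterWeight {A C : Type*} [Fintype A] [DecidableEq C]
    (π₀ π : A → ℝ) (φ : A → C) (c : C) : ℝ :=
  clusterProb π φ c / clusterProb π₀ φ c

/-- Fixing a context `x`, under cluster common support at `x`, cluster importance weighting is unbiased for any function `G` of the cluster:
`∑ a, π₀(a|x) · w(x, φ(x,a)) · G(φ(x,a)) = ∑ a, π(a|x) · G(φ(x,a))`. -/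
theorem cluster_importance_weighting_unbiased
    {X A C : Type*} [Fintype X] [Fintype A] [Fintype C]
    [Nonempty X] [Nonempty A] [Nonempty C] [DecidableEq C]
    (π₀ π : X → A → ℝ)
    (hπ₀ : ∀ x a, 0 ≤ π₀ x a) (hπ₀sum : ∀ x, ∑ a, π₀ x a = 1)
    (hπ : ∀ x a, 0 ≤ π x a) (hπsum : ∀ x, ∑ a, π x a = 1)
    (φ : X → A → C) (x : X)
    (hsupp : ∀ c : C, 0 < clusterProb (π x) (φ x) c → 0 < clusterProb (π₀ x) (φ x) c)
    (G : C → ℝ) :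
    ∑ a, π₀ x a * clusterWeight (π₀ x) (π x) (φ x) (φ x a) * G (φ x a)
      = ∑ a, π x a * G (φ x a) := by
  have key : ∀ (pol : A → ℝ) (F : C → ℝ),
      ∑ a, pol a * F (φ x a) = ∑ c, clusterProb pol (φ x) c * F c := by
    intro pol F
    rw [← Finset.sum_fiberwise univ (φ x) (fun a => pol a * F (φ x a))]
    refine Finset.sum_congr rfl fun c _ => ?_
    rw [clusterProb, Finset.sum_mul]
    refine Finset.sum_congr rfl fun a ha => ?_
    rw [(Finset.mem_filter.mp ha).2]
  rw [key (π x) G]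
  simp_rw [mul_assoc]
  rw [key (π₀ x) (fun c => clusterWeight (π₀ x) (π x) (φ x) c * G c)]
  refine Finset.sum_congr rfl fun c _ => ?_
  rw [← mul_assoc]
  congr 1
  unfold clusterWeight
  have hnn : 0 ≤ clusterProb (π x) (φ x) c := Finset.sum_nonneg fun a _ => hπ x a
  rcases hnn.eq_or_lt with h | h
  · rw [← h]; simp
  · exact mul_div_cancel₀ _ (hsupp c h).ne'
end

section
/- (Unbiasedness of OffCEM.) Assume cluster common support (for all x, c: π(c|x) > 0 implies π₀(c|x) > 0) and local correctness (for all x and all a, b with φ(x,a) = φ(x,b): q(x,a) − q(x,b) = f̂(x,a) − f̂(x,b)). Then the expectation of the OffCEM estimator on a single logged sample equals the policy value: Σ_x p(x) Σ_a π₀(a|x) Σ_r p(r|x,a) · [ w(x, φ(x,a)) · (ρ(r) − f̂(x,a)) + f̂(x,π) ] = V(π). -/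
open Finset

/-- Unbiasedness of the OffCEM estimator under cluster common support and
local correctness: the expectation of the OffCEM estimator on a single logged
sample equals the policy value `V(π)`. -/
theorem offcem_unbiased
    {X A C R : Type*} [Fintype X] [Fintype A] [Fintype C] [Fintype R]
    [Nonempty X] [Nonempty A] [Nonempty C] [Nonempty R] [DecidableEq C]
    (p : X → ℝ) (hp : ∀ x, 0 ≤ p x) (hpsum : ∑ x, p x = 1)
    (π₀ π : X → A → ℝ)
    (hπ₀ : ∀ x a, 0 ≤ π₀ x a) (hπ₀sum : ∀ x, ∑ a, π₀ x a = 1)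
    (hπ : ∀ x a, 0 ≤ π x a) (hπsum : ∀ x, ∑ a, π x a = 1)
    (φ : X → A → C)
    (q fhat : X → A → ℝ)
    (ρ : R → ℝ) (pr : X → A → R → ℝ)
    (hpr : ∀ x a r, 0 ≤ pr x a r) (hprsum : ∀ x a, ∑ r, pr x a r = 1)
    (hmean : ∀ x a, ∑ r, pr x a r * ρ r = q x a)
    (hsupp : ∀ x (c : C),
      0 < clusterProb (π x) (φ x) c → 0 < clusterProb (π₀ x) (φ x) c)
    (hlc : ∀ x a b, φ x a = φ x b → q x a - q x b = fhat x a - fhat x b) :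
    ∑ x, p x * ∑ a, π₀ x a * ∑ r, pr x a r *
        (clusterWeight (π₀ x) (π x) (φ x) (φ x a) * (ρ r - fhat x a)
          + ∑ a', π x a' * fhat x a')
      = ∑ x, p x * ∑ a, π x a * q x a := by
  refine Finset.sum_congr rfl fun x _ => ?_
  congr 1
  -- expectation over rewards
  have h1 : ∀ a, ∑ r, pr x a r *
        (clusterWeight (π₀ x) (π x) (φ x) (φ x a) * (ρ r - fhat x a)
          + ∑ a', π x a' * fhat x a')
      = clusterWeight (π₀ x) (π x) (φ x) (φ x a) * (q x a - fhat x a)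
          + ∑ a', π x a' * fhat x a' := by
    intro a
    generalize clusterWeight (π₀ x) (π x) (φ x) (φ x a) = w
    generalize ∑ a', π x a' * fhat x a' = F
    have : ∀ r, pr x a r * (w * (ρ r - fhat x a) + F)
        = w * (pr x a r * ρ r) + (F - w * fhat x a) * pr x a r := fun r => by ring
    simp only [this, Finset.sum_add_distrib, ← Finset.mul_sum, hmean, hprsum]
    ring
  simp only [h1]
  simp only [mul_add, Finset.sum_add_distrib, ← Finset.sum_mul, hπ₀sum, one_mul]
  -- cluster-wise change of measure
  have h2 : ∑ a, π₀ x a * (clusterWeight (π₀ x) (π x) (φ x) (φ x a) * (q x a - fhat x a))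
      = ∑ a, π x a * (q x a - fhat x a) := by
    rw [← Finset.sum_fiberwise univ (φ x), ← Finset.sum_fiberwise univ (φ x)
      (fun a => π x a * (q x a - fhat x a))]
    refine Finset.sum_congr rfl fun c _ => ?_
    by_cases hne : ∃ b, φ x b = c
    · obtain ⟨b, hb⟩ := hne
      have hg : ∀ a, φ x a = c → q x a - fhat x a = q x b - fhat x b := by
        intro a ha
        have := hlc x a b (ha.trans hb.symm)
        linarith
      have hl : ∑ a ∈ univ.filter (fun a => φ x a = c),
            π₀ x a * (clusterWeight (π₀ x) (π x) (φ x) (φ x a) * (q x a - fhat x a))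
          = clusterProb (π₀ x) (φ x) c *
            (clusterWeight (π₀ x) (π x) (φ x) c * (q x b - fhat x b)) := by
        rw [clusterProb, Finset.sum_mul]
        refine Finset.sum_congr rfl fun a ha => ?_
        have ha' := (Finset.mem_filter.mp ha).2
        rw [hg a ha', ha']
      have hr : ∑ a ∈ univ.filter (fun a => φ x a = c), π x a * (q x a - fhat x a)
          = clusterProb (π x) (φ x) c * (q x b - fhat x b) := by
        rw [clusterProb, Finset.sum_mul]
        refine Finset.sum_congr rfl fun a ha => ?_
        rw [hg a (Finset.mem_filter.mp ha).2]
      have hnn : 0 ≤ clusterProb (π x) (φ x) c := Finset.sum_nonneg fun a _ => hπ x a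
      rw [hl, hr, ← mul_assoc]
      congr 1
      rw [clusterWeight]
      rcases hnn.eq_or_lt with h0 | hpos
      · rw [← h0]; simp
      · exact mul_div_cancel₀ _ (hsupp x c hpos).ne'
    · have : univ.filter (fun a => φ x a = c) = ∅ :=
        Finset.filter_eq_empty_iff.mpr fun a _ h => hne ⟨a, h⟩
      rw [this]; simp
  rw [h2, ← Finset.sum_add_distrib]
  exact Finset.sum_congr rfl fun a _ => by ring
end

section
/- (Bias of OffCEM.) Assume common support: for all x, a, π(a|x) > 0 implies π₀(a|x) > 0. Let E := Σ_x p(x) Σ_a π₀(a|x) [ w(x, φ(x,a)) · (q(x,a) − f̂(x,a)) + f̂(x,π) ] be the expectation of the OffCEM estimator on a single logged sample. Then E − V(π) = (1/2) · Σ_x p(x) Σ_c π(c|x) Σ_{a} Σ_{b ≠ a, φ(x,a)=φ(x,b)=c} π₀(a|x,c) · π₀(b|x,c) · ( (q(x,a) − q(x,b)) − (f̂(x,a) − f̂(x,b)) ) · ( π(b|x,c)/π₀(b|x,c) − π(a|x,c)/π₀(a|x,c) ). -/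
open Finset

/-- Within-cluster conditional probability
`pol(a | c) = pol(a) · 𝟙{φ(a) = c} / pol(c)`, with the convention `t / 0 = 0`. -/
noncomputable def condProb {A C : Type*} [Fintype A] [DecidableEq C]
    (pol : A → ℝ) (φ : A → C) (a : A) (c : C) : ℝ :=
  pol a * (if φ a = c then (1 : ℝ) else 0) / clusterProb pol φ c

theorem offcem_pair_sum {A : Type*} (S : Finset A) (g u v : A → ℝ) :
    ∑ a ∈ S, ∑ b ∈ S, (g a - g b) * (u a * v b - u b * v a)
      = 2 * ((∑ a ∈ S, u a * g a) * (∑ a ∈ S, v a) - (∑ a ∈ S, v a * g a) * (∑ a ∈ S, u a)) := by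
  have h : ∀ a b, (g a - g b) * (u a * v b - u b * v a)
      = (u a * g a) * v b - (v a * g a) * u b - u a * (v b * g b) + v a * (u b * g b) := by
    intro a b; ring
  simp only [h, Finset.sum_add_distrib, Finset.sum_sub_distrib, ← Finset.sum_mul_sum]
  ring

theorem offcem_cluster {A C : Type*} [Fintype A] [DecidableEq A] [DecidableEq C]
    (π₀ π : A → ℝ) (hπ₀ : ∀ a, 0 ≤ π₀ a) (hπ : ∀ a, 0 ≤ π a)
    (φ : A → C) (q f : A → ℝ) (hsupp : ∀ a, 0 < π a → 0 < π₀ a) (c : C) :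
    clusterProb π φ c *
          ∑ a ∈ univ.filter (fun a => φ a = c),
            ∑ b ∈ univ.filter (fun b => b ≠ a ∧ φ b = c),
              condProb π₀ φ a c * condProb π₀ φ b c *
                ((q a - q b) - (f a - f b)) *
                (condProb π φ b c / condProb π₀ φ b c
                  - condProb π φ a c / condProb π₀ φ a c)
      = 2 * ∑ a ∈ univ.filter (fun a => φ a = c),
          (π₀ a * clusterWeight π₀ π φ (φ a) - π a) * (q a - f a) := by
  have hw : ∑ a ∈ univ.filter (fun a => φ a = c),
          (π₀ a * clusterWeight π₀ π φ (φ a) - π a) * (q a - f a)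
      = clusterWeight π₀ π φ c * (∑ a ∈ univ.filter (fun a => φ a = c), π₀ a * (q a - f a))
        - ∑ a ∈ univ.filter (fun a => φ a = c), π a * (q a - f a) := by
    rw [Finset.mul_sum, ← Finset.sum_sub_distrib]
    refine Finset.sum_congr rfl fun a ha => ?_
    rw [(Finset.mem_filter.1 ha).2]; ring
  rw [hw]
  by_cases hP : clusterProb π φ c = 0
  · have h0 : ∀ a ∈ univ.filter (fun a => φ a = c), π a = 0 :=
      (Finset.sum_eq_zero_iff_of_nonneg (fun a _ => hπ a)).1 hP
    rw [Finset.sum_congr rfl (g := fun _ => (0:ℝ)) (s₁ := univ.filter (fun a => φ a = c))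
      (f := fun a => π a * (q a - f a)) (fun a ha => by simp [h0 a ha])]
    simp [clusterWeight, hP]
  have hP0 : clusterProb π₀ φ c ≠ 0 := by
    intro h
    have h0 := (Finset.sum_eq_zero_iff_of_nonneg (fun a _ => hπ₀ a)).1 h
    apply hP
    refine Finset.sum_eq_zero fun a ha => ?_
    by_contra hne
    have := hsupp a (lt_of_le_of_ne (hπ a) (Ne.symm hne))
    rw [h0 a ha] at this
    exact lt_irrefl _ this
  have hz : ∀ a, π₀ a = 0 → π a = 0 := by
    intro a h
    by_contra hne
    have := hsupp a (lt_of_le_of_ne (hπ a) (Ne.symm hne))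
    rw [h] at this
    exact lt_irrefl _ this
  have hc : ∀ (pol : A → ℝ) a, a ∈ univ.filter (fun a => φ a = c) →
      condProb pol φ a c = pol a / clusterProb pol φ c := by
    intro pol a ha
    simp [condProb, (Finset.mem_filter.1 ha).2]
  have hcancel : ∀ a, (π₀ a / clusterProb π₀ φ c) *
      ((π a / clusterProb π φ c) / (π₀ a / clusterProb π₀ φ c)) = π a / clusterProb π φ c := by
    intro a
    by_cases h : π₀ a = 0
    · simp [h, hz a h]
    · field_simp
  have hin : ∀ a ∈ univ.filter (fun a => φ a = c),
      (∑ b ∈ univ.filter (fun b => b ≠ a ∧ φ b = c),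
              condProb π₀ φ a c * condProb π₀ φ b c *
                ((q a - q b) - (f a - f b)) *
                (condProb π φ b c / condProb π₀ φ b c
                  - condProb π φ a c / condProb π₀ φ a c))
      = ∑ b ∈ univ.filter (fun b => φ b = c),
          ((q a - f a) - (q b - f b)) *
            ((π₀ a / clusterProb π₀ φ c) * (π b / clusterProb π φ c)
              - (π₀ b / clusterProb π₀ φ c) * (π a / clusterProb π φ c)) := by
    intro a ha
    have hsub : univ.filter (fun b => b ≠ a ∧ φ b = c) ⊆ univ.filter (fun b => φ b = c) := by
      intro b hb
      simp only [Finset.mem_filter] at hb ⊢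
      exact ⟨hb.1, hb.2.2⟩
    rw [← Finset.sum_subset hsub]
    · refine Finset.sum_congr rfl fun b hb => ?_
      rw [hc _ a ha, hc _ a ha, hc _ b (hsub hb), hc _ b (hsub hb)]
      linear_combination ((q a - f a) - (q b - f b)) * (π₀ a / clusterProb π₀ φ c) * hcancel b
        - ((q a - f a) - (q b - f b)) * (π₀ b / clusterProb π₀ φ c) * hcancel a
    · intro b hb hb'
      have : b = a := by
        by_contra hne
        exact hb' (by simp only [Finset.mem_filter] at hb ⊢; exact ⟨hb.1, hne, hb.2⟩)
      subst this
      ring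
  rw [Finset.sum_congr rfl hin, offcem_pair_sum _ (fun a => q a - f a)
    (fun a => π₀ a / clusterProb π₀ φ c) (fun a => π a / clusterProb π φ c)]
  have e : ∀ (pol : A → ℝ), ∑ a ∈ univ.filter (fun a => φ a = c), pol a / clusterProb pol φ c * (q a - f a)
      = (∑ a ∈ univ.filter (fun a => φ a = c), pol a * (q a - f a)) / clusterProb pol φ c := by
    intro pol
    rw [Finset.sum_div]
    exact Finset.sum_congr rfl fun a _ => by ring
  have e1 : ∀ (pol : A → ℝ), clusterProb pol φ c ≠ 0 →
      ∑ a ∈ univ.filter (fun a => φ a = c), pol a / clusterProb pol φ c = 1 := by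
    intro pol h
    rw [← Finset.sum_div]
    exact div_self h
  rw [e, e, e1 _ hP, e1 _ hP0, clusterWeight]
  field_simp

/-- Bias of the OffCEM estimator (Theorem 3.3): under common support, the gap
between the expectation `E` of the OffCEM estimator on a single logged sample
and the policy value `V(π)` has the stated pairwise form. -/
theorem offcem_bias
    {X A C : Type*} [Fintype X] [Fintype A] [Fintype C]
    [Nonempty X] [Nonempty A] [Nonempty C] [DecidableEq A] [DecidableEq C]
    (p : X → ℝ) (hp : ∀ x, 0 ≤ p x) (hpsum : ∑ x, p x = 1)
    (π₀ π : X → A → ℝ)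
    (hπ₀ : ∀ x a, 0 ≤ π₀ x a) (hπ₀sum : ∀ x, ∑ a, π₀ x a = 1)
    (hπ : ∀ x a, 0 ≤ π x a) (hπsum : ∀ x, ∑ a, π x a = 1)
    (φ : X → A → C)
    (q fhat : X → A → ℝ)
    (hsupp : ∀ x a, 0 < π x a → 0 < π₀ x a) :
    (∑ x, p x * ∑ a, π₀ x a *
        (clusterWeight (π₀ x) (π x) (φ x) (φ x a) * (q x a - fhat x a)
          + ∑ a', π x a' * fhat x a'))
      - (∑ x, p x * ∑ a, π x a * q x a)
      = (1 / 2) * ∑ x, p x * ∑ c, clusterProb (π x) (φ x) c *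
          ∑ a ∈ univ.filter (fun a => φ x a = c),
            ∑ b ∈ univ.filter (fun b => b ≠ a ∧ φ x b = c),
              condProb (π₀ x) (φ x) a c * condProb (π₀ x) (φ x) b c *
                ((q x a - q x b) - (fhat x a - fhat x b)) *
                (condProb (π x) (φ x) b c / condProb (π₀ x) (φ x) b c
                  - condProb (π x) (φ x) a c / condProb (π₀ x) (φ x) a c) := by
  rw [← Finset.sum_sub_distrib, Finset.mul_sum]
  refine Finset.sum_congr rfl fun x _ => ?_
  rw [Finset.sum_congr rfl fun c _ => offcem_cluster (π₀ x) (π x) (hπ₀ x) (hπ x) (φ x) (q x)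
    (fhat x) (hsupp x) c, ← Finset.mul_sum, Finset.sum_fiberwise]
  have h1 : ∑ a, π₀ x a *
        (clusterWeight (π₀ x) (π x) (φ x) (φ x a) * (q x a - fhat x a)
          + ∑ a', π x a' * fhat x a')
      = ∑ a, π₀ x a * (clusterWeight (π₀ x) (π x) (φ x) (φ x a) * (q x a - fhat x a))
        + ∑ a', π x a' * fhat x a' := by
    simp only [mul_add, Finset.sum_add_distrib]
    rw [← Finset.sum_mul, hπ₀sum, one_mul]
  have h2 : ∑ a, (π₀ x a * clusterWeight (π₀ x) (π x) (φ x) (φ x a) - π x a) * (q x a - fhat x a)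
      = ∑ a, π₀ x a * (clusterWeight (π₀ x) (π x) (φ x) (φ x a) * (q x a - fhat x a))
        + ∑ a', π x a' * fhat x a' - ∑ a, π x a * q x a := by
    rw [← Finset.sum_add_distrib, ← Finset.sum_sub_distrib]
    exact Finset.sum_congr rfl fun a _ => by ring
  rw [h1, h2]
  ring
end

section
/- (Variance of OffCEM.) Assume cluster common support (for all x, c: π(c|x) > 0 implies π₀(c|x) > 0) and local correctness (for all x and all a, b with φ(x,a) = φ(x,b): q(x,a) − q(x,b) = f̂(x,a) − f̂(x,b)). Let Y(x,a,r) := w(x, φ(x,a)) · (ρ(r) − f̂(x,a)) + f̂(x,π), a real random variable under the joint distribution μ(x,a,r) := p(x)·π₀(a|x)·p(r|x,a). Then Var_μ[Y] = Σ_x p(x) Σ_a π₀(a|x) · w(x, φ(x,a))² · σ²(x,a) + Σ_x p(x) · Var_{π₀(·|x)}[ a ↦ w(x, φ(x,a)) · (q(x,a) − f̂(x,a)) ] + Var_p[ x ↦ Σ_a π(a|x) q(x,a) ]. -/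
open Finset

/-- Variance of a real-valued function `Z` under a distribution `ν` on a
finite type: `Var_ν[Z] = ∑ ω, ν ω * (Z ω - ∑ ω', ν ω' * Z ω')²`. -/
noncomputable def distVar {Ω : Type*} [Fintype Ω] (ν Z : Ω → ℝ) : ℝ :=
  ∑ ω, ν ω * (Z ω - ∑ ω', ν ω' * Z ω') ^ 2

theorem distVar_eq_aux {Ω : Type*} [Fintype Ω] (ν Z : Ω → ℝ) (h : ∑ ω, ν ω = 1) :
    distVar ν Z = ∑ ω, ν ω * Z ω ^ 2 - (∑ ω, ν ω * Z ω) ^ 2 := by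
  unfold distVar
  set m := ∑ ω, ν ω * Z ω with hm
  have : ∀ ω, ν ω * (Z ω - m) ^ 2 = ν ω * Z ω ^ 2 - 2 * m * (ν ω * Z ω) + m ^ 2 * ν ω := by
    intro ω; ring
  simp only [this, sum_add_distrib, sum_sub_distrib, ← mul_sum, h, ← hm]
  ring

theorem distVar_add_aux {Ω : Type*} [Fintype Ω] (ν Z : Ω → ℝ) (k : ℝ) (h : ∑ ω, ν ω = 1) :
    distVar ν (fun ω => Z ω + k) = distVar ν Z := by
  unfold distVar
  have : ∑ ω, ν ω * (Z ω + k) = ∑ ω, ν ω * Z ω + k := by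
    simp only [mul_add, sum_add_distrib, ← sum_mul, h, one_mul]
  simp only [this, add_sub_add_right_eq_sub]

theorem distVar_prod_aux {α β : Type*} [Fintype α] [Fintype β] (p : α → ℝ) (k : α → β → ℝ)
    (Z : α → β → ℝ) (hp : ∑ x, p x = 1) (hk : ∀ x, ∑ b, k x b = 1) :
    distVar (fun z : α × β => p z.1 * k z.1 z.2) (fun z => Z z.1 z.2)
      = ∑ x, p x * distVar (k x) (Z x) + distVar p (fun x => ∑ b, k x b * Z x b) := by
  have h1 : ∑ z : α × β, p z.1 * k z.1 z.2 = 1 := by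
    simp only [Fintype.sum_prod_type, ← mul_sum, hk, mul_one, hp]
  rw [distVar_eq_aux _ _ h1, distVar_eq_aux _ _ hp]
  simp only [fun x => distVar_eq_aux (k x) (Z x) (hk x), Fintype.sum_prod_type, mul_assoc,
    ← mul_sum, mul_sub, sum_sub_distrib]
  ring

theorem cluster_unbiased_aux {A C : Type*} [Fintype A] [Fintype C] [DecidableEq C]
    (π₀ π : A → ℝ) (hπ : ∀ a, 0 ≤ π a) (φ : A → C) (d : A → ℝ)
    (hπ₀ : ∀ a, 0 ≤ π₀ a)
    (hsupp : ∀ c, 0 < clusterProb π φ c → 0 < clusterProb π₀ φ c)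
    (hd : ∀ a b, φ a = φ b → d a = d b) :
    ∑ a, π₀ a * (clusterWeight π₀ π φ (φ a) * d a) = ∑ a, π a * d a := by
  rw [← sum_fiberwise univ φ, ← sum_fiberwise univ φ (fun a => π a * d a)]
  refine sum_congr rfl fun c _ => ?_
  by_cases hc : ∃ a0, φ a0 = c
  · obtain ⟨a0, h0⟩ := hc
    have e1 : ∑ a ∈ univ.filter (fun a => φ a = c), π₀ a * (clusterWeight π₀ π φ (φ a) * d a)
        = clusterProb π₀ φ c * (clusterWeight π₀ π φ c * d a0) := by
      unfold clusterProb
      rw [sum_mul]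
      refine sum_congr rfl fun a ha => ?_
      have ha' : φ a = c := (mem_filter.mp ha).2
      rw [ha', hd a a0 (ha'.trans h0.symm)]
    have e2 : ∑ a ∈ univ.filter (fun a => φ a = c), π a * d a = clusterProb π φ c * d a0 := by
      unfold clusterProb
      rw [sum_mul]
      refine sum_congr rfl fun a ha => ?_
      have ha' : φ a = c := (mem_filter.mp ha).2
      rw [hd a a0 (ha'.trans h0.symm)]
    rw [e1, e2]
    unfold clusterWeight
    have hn : 0 ≤ clusterProb π φ c := sum_nonneg fun a _ => hπ a
    rcases hn.eq_or_lt with h | h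
    · simp [← h]
    · have := (hsupp c h).ne'
      field_simp
  · have : univ.filter (fun a => φ a = c) = ∅ := by
      ext a; simp; exact fun h => hc ⟨a, h⟩
    simp [this]

/-- Variance of the OffCEM estimator (Proposition 3.4): under cluster common
support and local correctness, the variance of the per-sample OffCEM random
variable decomposes into the three stated terms. -/
theorem offcem_variance
    {X A C R : Type*} [Fintype X] [Fintype A] [Fintype C] [Fintype R]
    [Nonempty X] [Nonempty A] [Nonempty C] [Nonempty R] [DecidableEq C]
    (p : X → ℝ) (hp : ∀ x, 0 ≤ p x) (hpsum : ∑ x, p x = 1)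
    (π₀ π : X → A → ℝ)
    (hπ₀ : ∀ x a, 0 ≤ π₀ x a) (hπ₀sum : ∀ x, ∑ a, π₀ x a = 1)
    (hπ : ∀ x a, 0 ≤ π x a) (hπsum : ∀ x, ∑ a, π x a = 1)
    (φ : X → A → C)
    (q fhat : X → A → ℝ)
    (ρ : R → ℝ) (pr : X → A → R → ℝ)
    (hpr : ∀ x a r, 0 ≤ pr x a r) (hprsum : ∀ x a, ∑ r, pr x a r = 1)
    (hmean : ∀ x a, ∑ r, pr x a r * ρ r = q x a)
    (hsupp : ∀ x (c : C),
      0 < clusterProb (π x) (φ x) c → 0 < clusterProb (π₀ x) (φ x) c)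
    (hlc : ∀ x a b, φ x a = φ x b → q x a - q x b = fhat x a - fhat x b) :
    distVar (fun z : X × A × R => p z.1 * π₀ z.1 z.2.1 * pr z.1 z.2.1 z.2.2)
        (fun z : X × A × R =>
          clusterWeight (π₀ z.1) (π z.1) (φ z.1) (φ z.1 z.2.1)
              * (ρ z.2.2 - fhat z.1 z.2.1)
            + ∑ a', π z.1 a' * fhat z.1 a')
      = (∑ x, p x * ∑ a, π₀ x a *
            clusterWeight (π₀ x) (π x) (φ x) (φ x a) ^ 2 *
            (∑ r, pr x a r * (ρ r - q x a) ^ 2))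
        + (∑ x, p x * distVar (π₀ x)
            (fun a => clusterWeight (π₀ x) (π x) (φ x) (φ x a) * (q x a - fhat x a)))
        + distVar p (fun x => ∑ a, π x a * q x a) := by
  have hk : ∀ x, ∑ b : A × R, π₀ x b.1 * pr x b.1 b.2 = 1 := by
    intro x
    simp only [Fintype.sum_prod_type, ← mul_sum, hprsum, mul_one, hπ₀sum]
  have hr : ∀ x a (w k : ℝ), ∑ r, pr x a r * (w * (ρ r - fhat x a) + k)
      = w * (q x a - fhat x a) + k := by
    intro x a w k
    have : ∀ r, pr x a r * (w * (ρ r - fhat x a) + k)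
        = w * (pr x a r * ρ r) + (k - w * fhat x a) * pr x a r := by intro r; ring
    simp only [this, sum_add_distrib, ← mul_sum, hmean, hprsum]
    ring
  have hv : ∀ x a (w k : ℝ), distVar (pr x a) (fun r => w * (ρ r - fhat x a) + k)
      = w ^ 2 * ∑ r, pr x a r * (ρ r - q x a) ^ 2 := by
    intro x a w k
    unfold distVar
    rw [hr, mul_sum]
    exact sum_congr rfl fun r _ => by ring
  have hm : ∀ x, ∑ b : A × R, π₀ x b.1 * pr x b.1 b.2 *
      (clusterWeight (π₀ x) (π x) (φ x) (φ x b.1) * (ρ b.2 - fhat x b.1)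
        + ∑ a', π x a' * fhat x a') = ∑ a, π x a * q x a := by
    intro x
    have hu := cluster_unbiased_aux (π₀ x) (π x) (hπ x) (φ x) (fun a => q x a - fhat x a)
      (hπ₀ x) (hsupp x) (fun a b h => by have := hlc x a b h; linarith)
    simp only [Fintype.sum_prod_type, mul_assoc, ← mul_sum, hr]
    simp only [mul_add, sum_add_distrib, ← sum_mul, hπ₀sum, one_mul]
    rw [hu]
    simp only [mul_sub, sum_sub_distrib]
    ring
  have h1 := distVar_prod_aux p (fun x (b : A × R) => π₀ x b.1 * pr x b.1 b.2)
    (fun x b => clusterWeight (π₀ x) (π x) (φ x) (φ x b.1) * (ρ b.2 - fhat x b.1)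
        + ∑ a', π x a' * fhat x a') hpsum hk
  simp only [hm, ← mul_assoc] at h1
  rw [h1]
  congr 1
  rw [← sum_add_distrib]
  refine sum_congr rfl fun x _ => ?_
  rw [← mul_add]
  congr 1
  have h2 := distVar_prod_aux (π₀ x) (pr x)
    (fun a r => clusterWeight (π₀ x) (π x) (φ x) (φ x a) * (ρ r - fhat x a)
        + ∑ a', π x a' * fhat x a') (hπ₀sum x) (hprsum x)
  rw [h2]
  simp only [hr, hv, distVar_add_aux _ _ _ (hπ₀sum x), mul_assoc]
end

section
/- (Variance of the Doubly Robust estimator.) Assume common support: for all x, a, π(a|x) > 0 implies π₀(a|x) > 0, and let w(x,a) := π(a|x)/π₀(a|x) (convention t/0 = 0). Let q̂ : 𝒳 × 𝒜 → ℝ be any reward model, q̂(x,π) := Σ_a π(a|x) q̂(x,a), and Y(x,a,r) := w(x,a) · (ρ(r) − q̂(x,a)) + q̂(x,π), a real random variable under the joint distribution μ(x,a,r) := p(x)·π₀(a|x)·p(r|x,a). Then Var_μ[Y] = Σ_x p(x) Σ_a π₀(a|x) · w(x,a)² · σ²(x,a) + Σ_x p(x) · Var_{π₀(·|x)}[ a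 ↦ w(x,a) · (q(x,a) − q̂(x,a)) ] + Var_p[ x ↦ Σ_a π(a|x) q(x,a) ]. -/
open Finset

theorem sum_sq_shift {Ω : Type*} [Fintype Ω] (ν Z : Ω → ℝ) (h : ∑ ω, ν ω = 1) (c : ℝ) :
    ∑ ω, ν ω * (Z ω - c) ^ 2 = distVar ν Z + (∑ ω, ν ω * Z ω - c) ^ 2 := by
  unfold distVar
  have key : ∀ d : ℝ, ∑ ω, ν ω * (Z ω - d) ^ 2
      = ∑ ω, ν ω * Z ω ^ 2 - 2 * d * ∑ ω, ν ω * Z ω + d ^ 2 := by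
    intro d
    have : d ^ 2 = d ^ 2 * ∑ ω, ν ω := by rw [h, mul_one]
    rw [this, mul_sum, mul_sum, ← sum_sub_distrib, ← sum_add_distrib]
    exact sum_congr rfl fun ω _ => by ring
  rw [key, key]
  ring

/-- Variance of the Doubly Robust estimator: under common support, with the
vanilla importance weight `w(x,a) = π(a|x)/π₀(a|x)` (convention `t/0 = 0`),
the variance of the per-sample DR random variable decomposes into the three
stated terms. -/
theorem dr_variance
    {X A R : Type*} [Fintype X] [Fintype A] [Fintype R]
    [Nonempty X] [Nonempty A] [Nonempty R]
    (p : X → ℝ) (hp : ∀ x, 0 ≤ p x) (hpsum : ∑ x, p x = 1)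
    (π₀ π : X → A → ℝ)
    (hπ₀ : ∀ x a, 0 ≤ π₀ x a) (hπ₀sum : ∀ x, ∑ a, π₀ x a = 1)
    (hπ : ∀ x a, 0 ≤ π x a) (hπsum : ∀ x, ∑ a, π x a = 1)
    (q qhat : X → A → ℝ)
    (ρ : R → ℝ) (pr : X → A → R → ℝ)
    (hpr : ∀ x a r, 0 ≤ pr x a r) (hprsum : ∀ x a, ∑ r, pr x a r = 1)
    (hmean : ∀ x a, ∑ r, pr x a r * ρ r = q x a)
    (hsupp : ∀ x a, 0 < π x a → 0 < π₀ x a) :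
    distVar (fun z : X × A × R => p z.1 * π₀ z.1 z.2.1 * pr z.1 z.2.1 z.2.2)
        (fun z : X × A × R =>
          (π z.1 z.2.1 / π₀ z.1 z.2.1) * (ρ z.2.2 - qhat z.1 z.2.1)
            + ∑ a', π z.1 a' * qhat z.1 a')
      = (∑ x, p x * ∑ a, π₀ x a * (π x a / π₀ x a) ^ 2 *
            (∑ r, pr x a r * (ρ r - q x a) ^ 2))
        + (∑ x, p x * distVar (π₀ x)
            (fun a => (π x a / π₀ x a) * (q x a - qhat x a)))
        + distVar p (fun x => ∑ a, π x a * q x a) := by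
  have hw : ∀ x a, π₀ x a * (π x a / π₀ x a) = π x a := by
    intro x a
    rcases (hπ x a).eq_or_lt with h | h
    · rw [← h]; simp
    · have := (hsupp x a h).ne'
      field_simp
  have hrmean : ∀ x a (w v : ℝ), ∑ r, pr x a r * (w * (ρ r - qhat x a) + v)
      = w * (q x a - qhat x a) + v := by
    intro x a w v
    have e : ∀ r, pr x a r * (w * (ρ r - qhat x a) + v)
        = w * (pr x a r * ρ r) + pr x a r * (v - w * qhat x a) := fun r => by ring
    simp only [e]
    rw [sum_add_distrib, ← mul_sum, ← sum_mul, hmean, hprsum]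
    ring
  have hwmean : ∀ x, ∑ a, π₀ x a * ((π x a / π₀ x a) * (q x a - qhat x a))
      = ∑ a, π x a * q x a - ∑ a, π x a * qhat x a := by
    intro x
    rw [← sum_sub_distrib]
    refine sum_congr rfl fun a _ => ?_
    rw [← mul_assoc, hw]
    ring
  have hM : ∑ z : X × A × R, p z.1 * π₀ z.1 z.2.1 * pr z.1 z.2.1 z.2.2 *
      ((π z.1 z.2.1 / π₀ z.1 z.2.1) * (ρ z.2.2 - qhat z.1 z.2.1)
            + ∑ a', π z.1 a' * qhat z.1 a') = ∑ x, p x * ∑ a, π x a * q x a := by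
    simp only [Fintype.sum_prod_type, mul_assoc, ← mul_sum]
    refine sum_congr rfl fun x _ => ?_
    congr 1
    simp only [hrmean]
    simp only [mul_add, sum_add_distrib, ← sum_mul]
    rw [hwmean, hπ₀sum]
    ring
  have hr : ∀ x a (w v M : ℝ), ∑ r, pr x a r * (w * (ρ r - qhat x a) + v - M) ^ 2
      = w ^ 2 * (∑ r, pr x a r * (ρ r - q x a) ^ 2)
        + (w * (q x a - qhat x a) - (M - v)) ^ 2 := by
    intro x a w v M
    rw [sum_sq_shift (pr x a) (fun r => w * (ρ r - qhat x a) + v) (hprsum x a) M]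
    unfold distVar
    simp only [hrmean]
    rw [mul_sum]
    congr 1
    · exact sum_congr rfl fun r _ => by ring
    · ring
  have hL : ∀ M : ℝ, ∑ z : X × A × R, p z.1 * π₀ z.1 z.2.1 * pr z.1 z.2.1 z.2.2 *
      ((π z.1 z.2.1 / π₀ z.1 z.2.1) * (ρ z.2.2 - qhat z.1 z.2.1)
            + ∑ a', π z.1 a' * qhat z.1 a' - M) ^ 2
      = (∑ x, p x * ∑ a, π₀ x a * (π x a / π₀ x a) ^ 2 *
            (∑ r, pr x a r * (ρ r - q x a) ^ 2))
        + (∑ x, p x * distVar (π₀ x)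
            (fun a => (π x a / π₀ x a) * (q x a - qhat x a)))
        + ∑ x, p x * (∑ a, π x a * q x a - M) ^ 2 := by
    intro M
    rw [← sum_add_distrib, ← sum_add_distrib]
    simp only [Fintype.sum_prod_type, mul_assoc, ← mul_sum]
    refine sum_congr rfl fun x _ => ?_
    rw [← mul_add, ← mul_add]
    congr 1
    simp only [hr]
    simp only [mul_add, sum_add_distrib]
    rw [sum_sq_shift (π₀ x) (fun a => (π x a / π₀ x a) * (q x a - qhat x a)) (hπ₀sum x), hwmean]
    ring
  unfold distVar at hL ⊢
  rw [hM, hL]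
end

section
/- (Zero bias under within-cluster policy agreement.) Assume common support: for all x, a, π(a|x) > 0 implies π₀(a|x) > 0. Assume additionally that the target and logging policies agree conditionally within each cluster: for all x and a, π(a|x) · π₀(φ(x,a)|x) = π₀(a|x) · π(φ(x,a)|x). Then for every regression model f̂ : 𝒳 × 𝒜 → ℝ, the expectation of the OffCEM estimator on a single logged sample equals the policy value: Σ_x p(x) Σ_a π₀(a|x) [ w(x, φ(x,a)) · (q(x,a) − f̂(x,a)) + f̂(x,π) ] = V(π). -/
open Finset

/-- Zero bias of OffCEM under within-cluster policy agreement: if the target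
and logging policies agree conditionally within each cluster, i.e.
`π(a|x) · π₀(φ(x,a)|x) = π₀(a|x) · π(φ(x,a)|x)` for all `x, a`, then for every
regression model `f̂` the expectation of the OffCEM estimator on a single
logged sample equals the policy value. -/
theorem offcem_zero_bias_within_cluster_agreement
    {X A C : Type*} [Fintype X] [Fintype A] [Fintype C]
    [Nonempty X] [Nonempty A] [Nonempty C] [DecidableEq C]
    (p : X → ℝ) (hp : ∀ x, 0 ≤ p x) (hpsum : ∑ x, p x = 1)
    (π₀ π : X → A → ℝ)
    (hπ₀ : ∀ x a, 0 ≤ π₀ x a) (hπ₀sum : ∀ x, ∑ a, π₀ x a = 1)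
    (hπ : ∀ x a, 0 ≤ π x a) (hπsum : ∀ x, ∑ a, π x a = 1)
    (φ : X → A → C)
    (q : X → A → ℝ)
    (hsupp : ∀ x a, 0 < π x a → 0 < π₀ x a)
    (hagree : ∀ x a,
      π x a * clusterProb (π₀ x) (φ x) (φ x a)
        = π₀ x a * clusterProb (π x) (φ x) (φ x a))
    (fhat : X → A → ℝ) :
    ∑ x, p x * ∑ a, π₀ x a *
        (clusterWeight (π₀ x) (π x) (φ x) (φ x a) * (q x a - fhat x a)
          + ∑ a', π x a' * fhat x a')
      = ∑ x, p x * ∑ a, π x a * q x a := by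
  have key : ∀ x a, π₀ x a * clusterWeight (π₀ x) (π x) (φ x) (φ x a) = π x a := by
    intro x a
    unfold clusterWeight
    by_cases h0 : clusterProb (π₀ x) (φ x) (φ x a) = 0
    · have hle : π₀ x a ≤ clusterProb (π₀ x) (φ x) (φ x a) := by
        unfold clusterProb
        exact Finset.single_le_sum (f := π₀ x) (fun i _ => hπ₀ x i) (by simp)
      have hz : π x a = 0 := by
        by_contra hne
        have h1 := hsupp x a (lt_of_le_of_ne (hπ x a) (Ne.symm hne))
        linarith
      rw [h0, hz]
      simp
    · rw [← mul_div_assoc, ← hagree x a, mul_div_assoc, div_self h0, mul_one]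
  refine Finset.sum_congr rfl fun x _ => ?_
  congr 1
  simp only [mul_add, ← mul_assoc, key, Finset.sum_add_distrib, ← Finset.sum_mul, hπ₀sum,
    one_mul, mul_sub, Finset.sum_sub_distrib, sub_add_cancel]
end

section
/- (Zero bias under within-cluster deterministic logging.) Assume common support: for all x, a, π(a|x) > 0 implies π₀(a|x) > 0. Assume additionally that the logging policy is within-cluster deterministic: for every x ∈ 𝒳 and c ∈ 𝒞 there is at most one action a with φ(x,a) = c and π₀(a|x) > 0. Then for every regression model f̂ : 𝒳 × 𝒜 → ℝ, the expectation of the OffCEM estimator on a single logged sample equals the policy value: Σ_x p(x) Σ_a π₀(a|x) [ w(x, φ(x,a)) · (q(x,a) − f̂(x,a)) + f̂(x,π) ] = V(π). -/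
open Finset

/-- Zero bias of OffCEM under within-cluster deterministic logging: if for
every context `x` and cluster `c` there is at most one action `a` with
`φ(x,a) = c` and `π₀(a|x) > 0`, then for every regression model `f̂` the
expectation of the OffCEM estimator on a single logged sample equals the
policy value. -/
theorem offcem_zero_bias_within_cluster_deterministic
    {X A C : Type*} [Fintype X] [Fintype A] [Fintype C]
    [Nonempty X] [Nonempty A] [Nonempty C] [DecidableEq C]
    (p : X → ℝ) (hp : ∀ x, 0 ≤ p x) (hpsum : ∑ x, p x = 1)
    (π₀ π : X → A → ℝ)
    (hπ₀ : ∀ x a, 0 ≤ π₀ x a) (hπ₀sum : ∀ x, ∑ a, π₀ x a = 1)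
    (hπ : ∀ x a, 0 ≤ π x a) (hπsum : ∀ x, ∑ a, π x a = 1)
    (φ : X → A → C)
    (q : X → A → ℝ)
    (hsupp : ∀ x a, 0 < π x a → 0 < π₀ x a)
    (hdet : ∀ x (c : C) (a b : A),
      φ x a = c → φ x b = c → 0 < π₀ x a → 0 < π₀ x b → a = b)
    (fhat : X → A → ℝ) :
    ∑ x, p x * ∑ a, π₀ x a *
        (clusterWeight (π₀ x) (π x) (φ x) (φ x a) * (q x a - fhat x a)
          + ∑ a', π x a' * fhat x a')
      = ∑ x, p x * ∑ a, π x a * q x a := by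
  have key : ∀ x a, π₀ x a * clusterWeight (π₀ x) (π x) (φ x) (φ x a) = π x a := by
    intro x a
    have hz : ∀ b, π₀ x b = 0 → π x b = 0 := by
      intro b hb
      by_contra h
      have h1 := hsupp x b (lt_of_le_of_ne (hπ x b) (Ne.symm h))
      exact absurd hb h1.ne'
    rcases (hπ₀ x a).eq_or_lt with h0 | h0
    · rw [← h0, hz a h0.symm, zero_mul]
    · have hother : ∀ b, φ x b = φ x a → b ≠ a → π₀ x b = 0 := by
        intro b hb hne
        by_contra h
        exact hne (hdet x (φ x a) b a hb rfl
          (lt_of_le_of_ne (hπ₀ x b) (Ne.symm h)) h0)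
      have e0 : clusterProb (π₀ x) (φ x) (φ x a) = π₀ x a := by
        unfold clusterProb
        apply Finset.sum_eq_single_of_mem a (by simp)
        intro b hb hne
        exact hother b (by simpa using hb) hne
      have e1 : clusterProb (π x) (φ x) (φ x a) = π x a := by
        unfold clusterProb
        apply Finset.sum_eq_single_of_mem a (by simp)
        intro b hb hne
        exact hz b (hother b (by simpa using hb) hne)
      unfold clusterWeight
      rw [e0, e1]
      exact mul_div_cancel₀ _ h0.ne'
  refine Finset.sum_congr rfl fun x _ => ?_
  congr 1
  simp only [mul_add, ← mul_assoc, key]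
  rw [Finset.sum_add_distrib, ← Finset.sum_mul, hπ₀sum, one_mul, ← Finset.sum_add_distrib]
  exact Finset.sum_congr rfl fun a _ => by ring
end

section
/- (Intermediate covariance form of the OffCEM bias.) Assume common support: for all x, a, π(a|x) > 0 implies π₀(a|x) > 0, and let w(x,a) := π(a|x)/π₀(a|x) (convention t/0 = 0). Let E := Σ_x p(x) Σ_a π₀(a|x) [ w(x, φ(x,a)) · (q(x,a) − f̂(x,a)) + f̂(x,π) ] be the expectation of the OffCEM estimator on a single logged sample, and write Δ(x,a) := q(x,a) − f̂(x,a). Then E − V(π) = Σ_x p(x) Σ_c π₀(c|x) Σ_a π₀(a|x,c) · w(x,a) · ( (Σ_b π₀(b|x,c) Δ(x,b)) − Δ(x,a) ). -/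
open Finset

lemma cluster_mass_aux {A C : Type*} [Fintype A] [DecidableEq C]
    (r s : A → ℝ) (φ : A → C) (hr : ∀ a, 0 ≤ r a) (hs : ∀ a, 0 ≤ s a)
    (hsupp : ∀ a, 0 < s a → 0 < r a) (a : A) (c : C) :
    clusterProb r φ c * (condProb r φ a c * (s a / r a)) = if φ a = c then s a else 0 := by
  unfold condProb
  split_ifs with h
  · rcases (hs a).eq_or_lt with h0 | h0
    · simp [← h0]
    · have h1 := hsupp a h0
      have h2 : r a ≤ clusterProb r φ c := by
        unfold clusterProb
        exact Finset.single_le_sum (f := r) (fun i _ => hr i) (by simp [h])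
      have h3 : clusterProb r φ c ≠ 0 := (lt_of_lt_of_le h1 h2).ne'
      have h4 := h1.ne'
      field_simp
  · simp

lemma offcem_context_aux {A C : Type*} [Fintype A] [Fintype C] [DecidableEq C]
    (r s : A → ℝ) (φ : A → C) (hr : ∀ a, 0 ≤ r a) (hs : ∀ a, 0 ≤ s a)
    (hrsum : ∑ a, r a = 1) (hsupp : ∀ a, 0 < s a → 0 < r a) (q f : A → ℝ) :
    (∑ a, r a * (clusterWeight r s φ (φ a) * (q a - f a) + ∑ a', s a' * f a'))
      - ∑ a, s a * q a
      = ∑ c, clusterProb r φ c * ∑ a, condProb r φ a c * (s a / r a) *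
          ((∑ b, condProb r φ b c * (q b - f b)) - (q a - f a)) := by
  have hR : ∑ c, clusterProb r φ c * ∑ a, condProb r φ a c * (s a / r a) *
          ((∑ b, condProb r φ b c * (q b - f b)) - (q a - f a))
      = ∑ a, s a * ((∑ b, condProb r φ b (φ a) * (q b - f b)) - (q a - f a)) := by
    simp_rw [Finset.mul_sum, ← mul_assoc]
    rw [Finset.sum_comm]
    refine Finset.sum_congr rfl fun a _ => ?_
    simp_rw [mul_assoc (clusterProb r φ _) (condProb r φ a _) (s a / r a),
      cluster_mass_aux r s φ hr hs hsupp, ite_mul, zero_mul]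
    simp
  have hM : ∑ a, s a * ∑ b, condProb r φ b (φ a) * (q b - f b)
      = ∑ b, r b * (clusterWeight r s φ (φ b) * (q b - f b)) := by
    simp_rw [Finset.mul_sum]
    rw [Finset.sum_comm]
    refine Finset.sum_congr rfl fun b _ => ?_
    have : clusterWeight r s φ (φ b)
        = ∑ a, (if φ a = φ b then s a else 0) / clusterProb r φ (φ b) := by
      rw [clusterWeight, ← Finset.sum_div]
      congr 1
      rw [clusterProb, Finset.sum_filter]
    rw [this, Finset.sum_mul, Finset.mul_sum]
    refine Finset.sum_congr rfl fun a _ => ?_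
    unfold condProb
    by_cases h : φ a = φ b
    · simp only [h, if_true]
      ring
    · simp [h, Ne.symm h]
  rw [hR]
  simp_rw [mul_sub, mul_add, Finset.sum_add_distrib, Finset.sum_sub_distrib]
  rw [← Finset.sum_mul, hrsum]
  simp_rw [mul_sub, Finset.sum_sub_distrib] at hM ⊢
  simp only [mul_sub, Finset.sum_sub_distrib] at hM ⊢
  linarith

/-- Intermediate covariance form of the OffCEM bias: under common support,
writing `Δ(x,a) = q(x,a) - f̂(x,a)`, the gap between the expectation `E` of
the OffCEM estimator on a single logged sample and the policy value `V(π)`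
equals
`∑ x, p x * ∑ c, π₀(c|x) * ∑ a, π₀(a|x,c) · w(x,a) ·
  ((∑ b, π₀(b|x,c) Δ(x,b)) - Δ(x,a))`. -/
theorem offcem_bias_covariance_form
    {X A C : Type*} [Fintype X] [Fintype A] [Fintype C]
    [Nonempty X] [Nonempty A] [Nonempty C] [DecidableEq C]
    (p : X → ℝ) (hp : ∀ x, 0 ≤ p x) (hpsum : ∑ x, p x = 1)
    (π₀ π : X → A → ℝ)
    (hπ₀ : ∀ x a, 0 ≤ π₀ x a) (hπ₀sum : ∀ x, ∑ a, π₀ x a = 1)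
    (hπ : ∀ x a, 0 ≤ π x a) (hπsum : ∀ x, ∑ a, π x a = 1)
    (φ : X → A → C)
    (q fhat : X → A → ℝ)
    (hsupp : ∀ x a, 0 < π x a → 0 < π₀ x a) :
    (∑ x, p x * ∑ a, π₀ x a *
        (clusterWeight (π₀ x) (π x) (φ x) (φ x a) * (q x a - fhat x a)
          + ∑ a', π x a' * fhat x a'))
      - (∑ x, p x * ∑ a, π x a * q x a)
      = ∑ x, p x * ∑ c, clusterProb (π₀ x) (φ x) c *
          ∑ a, condProb (π₀ x) (φ x) a c * (π x a / π₀ x a) *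
            ((∑ b, condProb (π₀ x) (φ x) b c * (q x b - fhat x b))
              - (q x a - fhat x a)) := by
  rw [← Finset.sum_sub_distrib]
  refine Finset.sum_congr rfl fun x _ => ?_
  rw [← mul_sub, offcem_context_aux (π₀ x) (π x) (φ x) (hπ₀ x) (hπ x) (hπ₀sum x) (hsupp x)]
end

section
/- (Bias of OffCEM with stochastic action embeddings.) Assume common support: for all x, a, π(a|x) > 0 implies π₀(a|x) > 0, and let w(x,a) := π(a|x)/π₀(a|x) (convention t/0 = 0). Let E := Σ_x p(x) Σ_a Σ_e π₀(a,e|x) · w(x, φ(x,e)) · (q(x,a,e) − f̂(x,a,e)) + Σ_x p(x) · f̂(x,π) be the expectation of the generalized OffCEM estimator on a single logged sample, and write Δ(x,a,e) := q(x,a,e) − f̂(x,a,e). Then E − V(π) = (1/2) · Σ_x p(x) Σ_c π₀(c|x) Σ_{(a,e)} Σ_{(a',e')} π₀(a,e|x,c) · π₀(a',e'|x,c) · (Δ(x,a,e) − Δ(x,a',e')) · (w(x,a') − w(x,a)). -/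
open Finset

/-- The probability that a joint policy-embedding distribution `joint` on
`A × E` puts on the cluster `c` under the embedding clustering `φ : E → C`
(for a fixed context). -/
noncomputable def eClusterProb {A E C : Type*} [Fintype A] [Fintype E] [DecidableEq C]
    (joint : A → E → ℝ) (φ : E → C) (c : C) : ℝ :=
  ∑ a, ∑ e ∈ univ.filter (fun e => φ e = c), joint a e

/-- Within-cluster conditional probability of an action-embedding pair:
`joint(a,e | c) = joint(a,e) · 𝟙{φ(e) = c} / joint(c)`, with the convention
`t / 0 = 0`. -/
noncomputable def eCondProb {A E C : Type*} [Fintype A] [Fintype E] [DecidableEq C]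
    (joint : A → E → ℝ) (φ : E → C) (a : A) (e : E) (c : C) : ℝ :=
  joint a e * (if φ e = c then (1 : ℝ) else 0) / eClusterProb joint φ c

/-- Covariance identity for a finite nonnegative weight `s`. -/
lemma offcem_cluster_identity {I : Type*} [Fintype I] (s D w : I → ℝ) (hs : ∀ i, 0 ≤ s i) :
    (∑ i, s i) * ∑ i, ∑ j, (s i / ∑ k, s k) * (s j / ∑ k, s k) * (D i - D j) * (w j - w i)
      = 2 * (∑ i, s i * (((∑ k, s k * w k) / ∑ k, s k) * D i) - ∑ i, s i * w i * D i) := by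
  by_cases hM : ∑ i, s i = 0
  · have h0 : ∀ i, s i = 0 := fun i =>
      (Finset.sum_eq_zero_iff_of_nonneg (fun i _ => hs i)).1 hM i (Finset.mem_univ i)
    simp [h0]
  · have key : ∑ i, ∑ j, s i * s j * (D i - D j) * (w j - w i)
        = 2 * ((∑ i, s i * D i) * (∑ i, s i * w i) - (∑ i, s i * w i * D i) * ∑ i, s i) := by
      have e : ∀ i j, s i * s j * (D i - D j) * (w j - w i)
          = (s i * D i) * (s j * w j) - (s i * w i * D i) * s j
            - s i * (s j * w j * D j) + (s i * w i) * (s j * D j) := fun i j => by ring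
      simp only [e, Finset.sum_add_distrib, Finset.sum_sub_distrib, ← Finset.mul_sum,
        ← Finset.sum_mul]
      ring
    have e1 : ∑ i, ∑ j, (s i / ∑ k, s k) * (s j / ∑ k, s k) * (D i - D j) * (w j - w i)
        = (∑ i, ∑ j, s i * s j * (D i - D j) * (w j - w i)) / (∑ k, s k) ^ 2 := by
      simp only [Finset.sum_div]
      refine Finset.sum_congr rfl fun i _ => Finset.sum_congr rfl fun j _ => ?_
      ring
    have e2 : ∑ i, s i * (((∑ k, s k * w k) / ∑ k, s k) * D i)
        = ((∑ k, s k * w k) / ∑ k, s k) * ∑ i, s i * D i := by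
      rw [Finset.mul_sum]
      exact Finset.sum_congr rfl fun i _ => by ring
    rw [e1, key, e2]
    field_simp

/-- The cluster probability as a sum over pairs with an indicator. -/
lemma eClusterProb_eq_sum_prod {A E C : Type*} [Fintype A] [Fintype E] [DecidableEq C]
    (joint : A → E → ℝ) (φ : E → C) (c : C) :
    eClusterProb joint φ c
      = ∑ i : A × E, joint i.1 i.2 * (if φ i.2 = c then (1 : ℝ) else 0) := by
  simp [eClusterProb, Fintype.sum_prod_type, Finset.sum_filter]

/-- The bias identity for one context. -/
lemma offcem_context {A E C : Type*} [Fintype A] [Fintype E] [Fintype C] [DecidableEq C]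
    (m n : A → E → ℝ) (w : A → ℝ) (hm : ∀ a e, 0 ≤ m a e) (hn : ∀ a e, n a e = m a e * w a)
    (φ : E → C) (D : A → E → ℝ) :
    (∑ a, ∑ e, m a e * ((eClusterProb n φ (φ e) / eClusterProb m φ (φ e)) * D a e))
      - ∑ a, ∑ e, n a e * D a e
      = (1 / 2) * ∑ c, eClusterProb m φ c * ∑ a, ∑ e, ∑ a', ∑ e',
          eCondProb m φ a e c * eCondProb m φ a' e' c * (D a e - D a' e') * (w a' - w a) := by
  have hc : ∀ c, eClusterProb m φ c * ∑ a, ∑ e, ∑ a', ∑ e',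
          eCondProb m φ a e c * eCondProb m φ a' e' c * (D a e - D a' e') * (w a' - w a)
      = 2 * ((∑ a, ∑ e, if φ e = c then
            m a e * ((eClusterProb n φ c / eClusterProb m φ c) * D a e) else 0)
          - ∑ a, ∑ e, if φ e = c then n a e * D a e else 0) := by
    intro c
    have h := offcem_cluster_identity
      (fun i : A × E => m i.1 i.2 * (if φ i.2 = c then (1 : ℝ) else 0))
      (fun i => D i.1 i.2) (fun i => w i.1)
      (fun i => mul_nonneg (hm _ _) (by split_ifs <;> norm_num))
    have hN : eClusterProb n φ c
        = ∑ i : A × E, m i.1 i.2 * (if φ i.2 = c then (1 : ℝ) else 0) * w i.1 := by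
      rw [eClusterProb_eq_sum_prod]
      exact Finset.sum_congr rfl fun i _ => by rw [hn]; ring
    rw [← eClusterProb_eq_sum_prod, ← hN] at h
    simp only [Fintype.sum_prod_type] at h
    refine h.trans ?_
    congr 2
    · refine Finset.sum_congr rfl fun a _ => Finset.sum_congr rfl fun e _ => ?_
      split_ifs <;> ring
    · refine Finset.sum_congr rfl fun a _ => Finset.sum_congr rfl fun e _ => ?_
      rw [hn]
      split_ifs <;> ring
  have swap : ∀ F : C → A → E → ℝ, ∑ c, ∑ a, ∑ e, (if φ e = c then F c a e else 0)
      = ∑ a, ∑ e, F (φ e) a e := by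
    intro F
    rw [Finset.sum_comm]
    refine Finset.sum_congr rfl fun a _ => ?_
    rw [Finset.sum_comm]
    exact Finset.sum_congr rfl fun e _ => by simp
  simp only [hc]
  rw [← Finset.mul_sum, Finset.sum_sub_distrib,
    swap (fun c a e => m a e * ((eClusterProb n φ c / eClusterProb m φ c) * D a e)),
    swap (fun _ a e => n a e * D a e)]
  ring

/-- Bias of OffCEM with stochastic action embeddings: under common support,
writing `Δ(x,a,e) = q(x,a,e) - f̂(x,a,e)` and `w(x,a) = π(a|x)/π₀(a|x)`
(convention `t/0 = 0`), the gap between the expectation `E` of the generalized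
OffCEM estimator on a single logged sample and the policy value `V(π)` has the
stated pairwise form. -/
theorem offcem_bias_stochastic_embeddings
    {X A E C : Type*} [Fintype X] [Fintype A] [Fintype E] [Fintype C]
    [Nonempty X] [Nonempty A] [Nonempty E] [Nonempty C] [DecidableEq C]
    (p : X → ℝ) (hp : ∀ x, 0 ≤ p x) (hpsum : ∑ x, p x = 1)
    (π₀ π : X → A → ℝ)
    (hπ₀ : ∀ x a, 0 ≤ π₀ x a) (hπ₀sum : ∀ x, ∑ a, π₀ x a = 1)
    (hπ : ∀ x a, 0 ≤ π x a) (hπsum : ∀ x, ∑ a, π x a = 1)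
    (pe : X → A → E → ℝ)
    (hpe : ∀ x a e, 0 ≤ pe x a e) (hpesum : ∀ x a, ∑ e, pe x a e = 1)
    (φ : X → E → C)
    (q fhat : X → A → E → ℝ)
    (hsupp : ∀ x a, 0 < π x a → 0 < π₀ x a) :
    ((∑ x, p x * ∑ a, ∑ e, (π₀ x a * pe x a e) *
          ((eClusterProb (fun a' e' => π x a' * pe x a' e') (φ x) (φ x e)
              / eClusterProb (fun a' e' => π₀ x a' * pe x a' e') (φ x) (φ x e))
            * (q x a e - fhat x a e)))
        + (∑ x, p x * ∑ a, ∑ e, (π x a * pe x a e) * fhat x a e))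
      - (∑ x, p x * ∑ a, ∑ e, (π x a * pe x a e) * q x a e)
      = (1 / 2) * ∑ x, p x * ∑ c,
          eClusterProb (fun a e => π₀ x a * pe x a e) (φ x) c *
            ∑ a, ∑ e, ∑ a', ∑ e',
              eCondProb (fun a'' e'' => π₀ x a'' * pe x a'' e'') (φ x) a e c *
              eCondProb (fun a'' e'' => π₀ x a'' * pe x a'' e'') (φ x) a' e' c *
              ((q x a e - fhat x a e) - (q x a' e' - fhat x a' e')) *
              (π x a' / π₀ x a' - π x a / π₀ x a) := by
  have hx : ∀ x, _ := fun x => offcem_context (fun a e => π₀ x a * pe x a e)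
    (fun a e => π x a * pe x a e) (fun a => π x a / π₀ x a)
    (fun a e => mul_nonneg (hπ₀ x a) (hpe x a e))
    (fun a e => by
      by_cases h : π₀ x a = 0
      · have h' : π x a = 0 := by
          by_contra hne
          exact (hsupp x a (lt_of_le_of_ne (hπ x a) (Ne.symm hne))).ne' h
        simp [h, h']
      · field_simp)
    (φ x) (fun a e => q x a e - fhat x a e)
  rw [← Finset.sum_add_distrib, ← Finset.sum_sub_distrib, Finset.mul_sum]
  refine Finset.sum_congr rfl fun x _ => ?_
  rw [mul_left_comm, ← hx x]
  simp only [mul_sub (π _ _ * pe _ _ _), Finset.sum_sub_distrib]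
  ring
end

section
/- (Cluster importance weight as a conditional expectation, stochastic-embedding version.) Assume common support: for all x, a, π(a|x) > 0 implies π₀(a|x) > 0, and let w(x,a) := π(a|x)/π₀(a|x) (convention t/0 = 0). Then for every x ∈ 𝒳 and c ∈ 𝒞 with π₀(c|x) > 0, w(x,c) = Σ_a Σ_e π₀(a,e|x,c) · w(x,a). -/
open Finset

/-- Cluster importance weight as a conditional expectation of the vanilla importance weight, stochastic-embedding version: under common support, for
every `x` and cluster `c` with `π₀(c|x) > 0`,
`w(x,c) = ∑ a, ∑ e, π₀(a,e|x,c) · w(x,a)`. -/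
theorem cluster_weight_eq_conditional_expectation_embeddings
    {X A E C : Type*} [Fintype X] [Fintype A] [Fintype E] [Fintype C]
    [Nonempty X] [Nonempty A] [Nonempty E] [Nonempty C] [DecidableEq C]
    (π₀ π : X → A → ℝ)
    (hπ₀ : ∀ x a, 0 ≤ π₀ x a) (hπ₀sum : ∀ x, ∑ a, π₀ x a = 1)
    (hπ : ∀ x a, 0 ≤ π x a) (hπsum : ∀ x, ∑ a, π x a = 1)
    (pe : X → A → E → ℝ)
    (hpe : ∀ x a e, 0 ≤ pe x a e) (hpesum : ∀ x a, ∑ e, pe x a e = 1)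
    (φ : X → E → C)
    (hsupp : ∀ x a, 0 < π x a → 0 < π₀ x a)
    (x : X) (c : C)
    (hc : 0 < eClusterProb (fun a e => π₀ x a * pe x a e) (φ x) c) :
    eClusterProb (fun a e => π x a * pe x a e) (φ x) c
        / eClusterProb (fun a e => π₀ x a * pe x a e) (φ x) c
      = ∑ a, ∑ e,
          eCondProb (fun a' e' => π₀ x a' * pe x a' e') (φ x) a e c *
            (π x a / π₀ x a) := by
  have key : ∀ a, π₀ x a * (π x a / π₀ x a) = π x a := by
    intro a
    by_cases h : π₀ x a = 0
    · have h2 : π x a = 0 := by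
        by_contra hne
        have := hsupp x a (lt_of_le_of_ne (hπ x a) (Ne.symm hne))
        exact absurd h this.ne'
      simp [h, h2]
    · field_simp
  unfold eCondProb
  generalize eClusterProb (fun a e => π₀ x a * pe x a e) (φ x) c = D
  unfold eClusterProb
  rw [Finset.sum_div]
  refine Finset.sum_congr rfl fun a _ => ?_
  rw [Finset.sum_filter, Finset.sum_div]
  refine Finset.sum_congr rfl fun e _ => ?_
  split_ifs
  · calc π x a * pe x a e / D = (π₀ x a * (π x a / π₀ x a)) * pe x a e / D := by rw [key a]
      _ = _ := by ring
  · simp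
end
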